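/- For every r ≥ 0, the category r-bC of r-bigraded complexes over R admits a cofibrantly generated model category structure in which the fibrations are the bidegreewise surjections and the weak equivalences are the quasi-isomorphisms; a set of generating acyclic cofibrations is {0 → Y_r(p,n)}_{p,n ∈ ℤ} and a set of generating cofibrations is {δ_r^{p,n} : R^{p-r,n-r+1} → Y_r(p,n)}_{p,n ∈ ℤ}, where δ_r^{p,n} is the inclusion of the cycle generator. -/

import Mathlib

open CategoryTheory Limits

noncomputable section

attribute [local instance] Classical.propDecidable

/-! ## `r`-bigraded complexes -/

structure BC (R : Type) [CommRing R] (r : ℕ) : Type 1 where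
  X : ℤ → ℤ → Type
  [acg : ∀ p n, AddCommGroup (X p n)]
  [mdl : ∀ p n, Module R (X p n)]
  d : ∀ (p n p' n' : ℤ), p' + (r : ℤ) = p → n' + (r : ℤ) = n + 1 → (X p n →ₗ[R] X p' n')
  d_comp_d : ∀ (p n p' n' p'' n'' : ℤ) (h1 : p' + (r : ℤ) = p) (h2 : n' + (r : ℤ) = n + 1)
      (h3 : p'' + (r : ℤ) = p') (h4 : n'' + (r : ℤ) = n' + 1),
      (d p' n' p'' n'' h3 h4).comp (d p n p' n' h1 h2) = 0

attribute [instance] BC.acg BC.mdl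

namespace BC

variable {R : Type} [CommRing R] {r : ℕ}

/-- Transport along equalities of bidegrees. -/
def cst (A : BC R r) {p n p' n' : ℤ} (h1 : p = p') (h2 : n = n') : A.X p n →ₗ[R] A.X p' n' :=
  match p', n', h1, h2 with
  | _, _, rfl, rfl => LinearMap.id

@[simp] lemma cst_rfl (A : BC R r) {p n : ℤ} (x : A.X p n) :
    A.cst (rfl : p = p) (rfl : n = n) x = x := rfl

lemma cst_cst (A : BC R r) {p n p' n' p'' n'' : ℤ} (h1 : p = p') (h2 : n = n')
    (h3 : p' = p'') (h4 : n' = n'') (x : A.X p n) :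
    A.cst h3 h4 (A.cst h1 h2 x) = A.cst (h1.trans h3) (h2.trans h4) x := by
  subst h1; subst h2; subst h3; subst h4; rfl

lemma cst_proof_irrel (A : BC R r) {p n p' n' : ℤ} (h1 h1' : p = p') (h2 h2' : n = n')
    (x : A.X p n) : A.cst h1 h2 x = A.cst h1' h2' x := rfl

lemma cst_inj (A : BC R r) {p n p' n' : ℤ} (h1 : p = p') (h2 : n = n') :
    Function.Injective (A.cst h1 h2) := by
  subst h1; subst h2; exact fun a b h => h

/-- The differential commutes with transport. -/
lemma d_cst (A : BC R r) {p₁ n₁ q₁ t₁ p₂ n₂ q₂ t₂ : ℤ} (e1 : p₁ = p₂) (e2 : n₁ = n₂)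
    (hq : q₁ + (r : ℤ) = p₁) (ht : t₁ + (r : ℤ) = n₁ + 1)
    (hq' : q₂ + (r : ℤ) = p₂) (ht' : t₂ + (r : ℤ) = n₂ + 1)
    (f1 : q₁ = q₂) (f2 : t₁ = t₂) (x : A.X p₁ n₁) :
    A.d p₂ n₂ q₂ t₂ hq' ht' (A.cst e1 e2 x) = A.cst f1 f2 (A.d p₁ n₁ q₁ t₁ hq ht x) := by
  subst e1; subst e2; subst f1; subst f2; rfl

/-- The differential does not depend on the chosen representation of the target indices. -/
lemma d_index_eq (A : BC R r) {p n q t q' t' : ℤ}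
    (h1 : q + (r : ℤ) = p) (h2 : t + (r : ℤ) = n + 1)
    (h1' : q' + (r : ℤ) = p) (h2' : t' + (r : ℤ) = n + 1)
    (f1 : q = q') (f2 : t = t') (x : A.X p n) :
    A.d p n q' t' h1' h2' x = A.cst f1 f2 (A.d p n q t h1 h2 x) := by
  subst f1; subst f2; rfl

lemma d_cst_d (A : BC R r) {p n p' n' q m : ℤ} (h1 : p' + (r : ℤ) = p)
    (h2 : n' + (r : ℤ) = n + 1) (e1 : p' = q) (e2 : n' = m) {q' m' : ℤ}
    (h1' : q' + (r : ℤ) = q) (h2' : m' + (r : ℤ) = m + 1) (x : A.X p n) :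
    A.d q m q' m' h1' h2' (A.cst e1 e2 (A.d p n p' n' h1 h2 x)) = 0 := by
  subst e1; subst e2
  exact congrArg (fun g => g x) (A.d_comp_d p n p' n' q' m' h1 h2 h1' h2')

def cycles (A : BC R r) (p n : ℤ) : Submodule R (A.X p n) :=
  LinearMap.ker (A.d p n (p - (r : ℤ)) (n + 1 - (r : ℤ)) (by ring) (by ring))

def boundaries (A : BC R r) (p n : ℤ) : Submodule R (A.X p n) :=
  LinearMap.range (A.d (p + (r : ℤ)) (n + (r : ℤ) - 1) p n (by ring) (by ring))

lemma mem_cycles (A : BC R r) {p n : ℤ} (x : A.X p n) :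
    x ∈ A.cycles p n ↔
      A.d p n (p - (r : ℤ)) (n + 1 - (r : ℤ)) (by ring) (by ring) x = 0 :=
  Iff.rfl

lemma mem_cycles_iff (A : BC R r) {p n q m : ℤ} (h1 : q + (r : ℤ) = p)
    (h2 : m + (r : ℤ) = n + 1) (x : A.X p n) :
    x ∈ A.cycles p n ↔ A.d p n q m h1 h2 x = 0 := by
  have e1 : q = p - (r : ℤ) := by omega
  have e2 : m = n + 1 - (r : ℤ) := by omega
  subst e1; subst e2
  exact A.mem_cycles x

lemma d_mem_boundaries (A : BC R r) {p n q m : ℤ} (h1 : q + (r : ℤ) = p)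
    (h2 : m + (r : ℤ) = n + 1) (x : A.X p n) :
    A.d p n q m h1 h2 x ∈ A.boundaries q m := by
  have e1 : p = q + (r : ℤ) := by omega
  have e2 : n = m + (r : ℤ) - 1 := by omega
  refine ⟨A.cst e1 e2 x, ?_⟩
  rw [d_cst (f1 := rfl) (f2 := rfl) (hq := h1) (ht := h2)]
  rfl

lemma d_mem_cycles (A : BC R r) {p n q m : ℤ} (h1 : q + (r : ℤ) = p)
    (h2 : m + (r : ℤ) = n + 1) (x : A.X p n) :
    A.d p n q m h1 h2 x ∈ A.cycles q m := by
  rw [A.mem_cycles]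
  exact congrArg (fun g => g x)
    (A.d_comp_d p n q m (q - (r : ℤ)) (m + 1 - (r : ℤ)) h1 h2 (by ring) (by ring))

lemma boundaries_le_cycles (A : BC R r) (p n : ℤ) : A.boundaries p n ≤ A.cycles p n := by
  rintro x ⟨y, rfl⟩
  exact A.d_mem_cycles _ _ y

lemma cst_mem_cycles (A : BC R r) {p n p' n' : ℤ} (h1 : p = p') (h2 : n = n')
    {x : A.X p n} (hx : x ∈ A.cycles p n) : A.cst h1 h2 x ∈ A.cycles p' n' := by
  subst h1; subst h2; exact hx

lemma cst_mem_boundaries (A : BC R r) {p n p' n' : ℤ} (h1 : p = p') (h2 : n = n')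
    {x : A.X p n} (hx : x ∈ A.boundaries p n) : A.cst h1 h2 x ∈ A.boundaries p' n' := by
  subst h1; subst h2; exact hx

/-- The submodule of `cycles` by which we quotient to get homology. -/
def hsub (A : BC R r) (p n : ℤ) : Submodule R ↥(A.cycles p n) :=
  (A.boundaries p n).comap (A.cycles p n).subtype

/-- Homology of an `r`-bigraded complex. -/
abbrev H (A : BC R r) (p n : ℤ) : Type := ↥(A.cycles p n) ⧸ A.hsub p n

/-- The homology class of a cycle. -/
def mkH (A : BC R r) {p n : ℤ} (x : ↥(A.cycles p n)) : A.H p n :=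
  Submodule.Quotient.mk x

lemma mkH_surjective (A : BC R r) (p n : ℤ) : Function.Surjective (A.mkH (p := p) (n := n)) :=
  Submodule.Quotient.mk_surjective _

@[simp] lemma mkH_add (A : BC R r) {p n : ℤ} (x y : ↥(A.cycles p n)) :
    A.mkH (x + y) = A.mkH x + A.mkH y := rfl

@[simp] lemma mkH_smul (A : BC R r) {p n : ℤ} (c : R) (x : ↥(A.cycles p n)) :
    A.mkH (c • x) = c • A.mkH x := rfl

@[simp] lemma mkH_zero (A : BC R r) {p n : ℤ} :
    A.mkH (0 : ↥(A.cycles p n)) = 0 := rfl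

lemma mkH_eq_zero (A : BC R r) {p n : ℤ} (x : ↥(A.cycles p n))
    (hx : (x : A.X p n) ∈ A.boundaries p n) : A.mkH x = 0 :=
  (Submodule.Quotient.mk_eq_zero _).2 hx

/-- Acyclicity. -/
def Acyclic (A : BC R r) : Prop := ∀ p n : ℤ, Subsingleton (A.H p n)

end BC

/-! ## Morphisms of bigraded complexes -/

@[ext] structure BCHom {R : Type} [CommRing R] {r : ℕ} (A B : BC R r) where
  f : ∀ p n : ℤ, A.X p n →ₗ[R] B.X p n
  comm : ∀ (p n p' n' : ℤ) (h1 : p' + (r : ℤ) = p) (h2 : n' + (r : ℤ) = n + 1),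
    (B.d p n p' n' h1 h2).comp (f p n) = (f p' n').comp (A.d p n p' n' h1 h2)

namespace BCHom

variable {R : Type} [CommRing R] {r : ℕ} {A B C : BC R r}

lemma comm_apply (φ : BCHom A B) (p n p' n' : ℤ) (h1 : p' + (r : ℤ) = p)
    (h2 : n' + (r : ℤ) = n + 1) (x : A.X p n) :
    B.d p n p' n' h1 h2 (φ.f p n x) = φ.f p' n' (A.d p n p' n' h1 h2 x) :=
  congrArg (fun g => g x) (φ.comm p n p' n' h1 h2)

lemma f_cst (φ : BCHom A B) {p n p' n' : ℤ} (e1 : p = p') (e2 : n = n') (x : A.X p n) :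
    φ.f p' n' (A.cst e1 e2 x) = B.cst e1 e2 (φ.f p n x) := by
  subst e1; subst e2; rfl

protected def id (A : BC R r) : BCHom A A :=
  ⟨fun _ _ => LinearMap.id, fun _ _ _ _ _ _ => rfl⟩

protected def comp (φ : BCHom A B) (ψ : BCHom B C) : BCHom A C where
  f p n := (ψ.f p n).comp (φ.f p n)
  comm p n p' n' h1 h2 := by
    ext x
    simp only [LinearMap.coe_comp, Function.comp_apply]
    rw [ψ.comm_apply, φ.comm_apply]

lemma map_cycles (φ : BCHom A B) (p n : ℤ) {x : A.X p n} (hx : x ∈ A.cycles p n) :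
    φ.f p n x ∈ B.cycles p n := by
  rw [BC.mem_cycles] at hx ⊢
  rw [φ.comm_apply, hx, map_zero]

lemma map_boundaries (φ : BCHom A B) (p n : ℤ) {x : A.X p n} (hx : x ∈ A.boundaries p n) :
    φ.f p n x ∈ B.boundaries p n := by
  obtain ⟨y, rfl⟩ := hx
  rw [← φ.comm_apply]
  exact B.d_mem_boundaries _ _ _

/-- The induced map on cycles. -/
def cyclesMap (φ : BCHom A B) (p n : ℤ) : ↥(A.cycles p n) →ₗ[R] ↥(B.cycles p n) :=
  (φ.f p n).restrict (fun x hx => φ.map_cycles p n hx)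

@[simp] lemma cyclesMap_apply (φ : BCHom A B) (p n : ℤ) (x : ↥(A.cycles p n)) :
    ((φ.cyclesMap p n) x : B.X p n) = φ.f p n x := rfl

/-- The induced map on homology. -/
def hMap (φ : BCHom A B) (p n : ℤ) : A.H p n →ₗ[R] B.H p n :=
  Submodule.mapQ _ _ (φ.cyclesMap p n) (by
    intro x hx
    exact φ.map_boundaries p n hx)

@[simp] lemma hMap_mkH (φ : BCHom A B) (p n : ℤ) (x : ↥(A.cycles p n)) :
    φ.hMap p n (A.mkH x) = B.mkH (φ.cyclesMap p n x) := rfl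

lemma hMap_id (p n : ℤ) : (BCHom.id A).hMap p n = LinearMap.id := by
  apply Submodule.linearMap_qext
  ext x
  rfl

lemma hMap_comp (φ : BCHom A B) (ψ : BCHom B C) (p n : ℤ) :
    (φ.comp ψ).hMap p n = (ψ.hMap p n).comp (φ.hMap p n) := by
  apply Submodule.linearMap_qext
  ext x
  rfl

end BCHom

instance {R : Type} [CommRing R] {r : ℕ} : Category (BC R r) where
  Hom A B := BCHom A B
  id A := BCHom.id A
  comp φ ψ := φ.comp ψ
  id_comp φ := by apply BCHom.ext; rfl
  comp_id φ := by apply BCHom.ext; rfl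
  assoc φ ψ χ := by apply BCHom.ext; rfl

namespace BC

variable {R : Type} [CommRing R] {r : ℕ}

/-- Quasi-isomorphisms of bigraded complexes. -/
def IsQIso {A B : BC R r} (φ : A ⟶ B) : Prop :=
  ∀ p n : ℤ, Function.Bijective (BCHom.hMap φ p n)

/-- Bidegreewise surjections. -/
def IsDegreewiseSurj {A B : BC R r} (φ : A ⟶ B) : Prop :=
  ∀ p n : ℤ, Function.Surjective (BCHom.f φ p n)

/-- The class of bidegreewise surjections. -/
def degreewiseSurj (R : Type) [CommRing R] (r : ℕ) : MorphismProperty (BC R r) :=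
  fun _ _ φ => IsDegreewiseSurj φ

/-- The class of quasi-isomorphisms. -/
def qIso (R : Type) [CommRing R] (r : ℕ) : MorphismProperty (BC R r) :=
  fun _ _ φ => IsQIso φ

end BC
/-! ## Model category structures -/

universe v u

section ModelStructures

variable {C : Type u} [Category.{v} C] {D : Type u} [Category.{v} D]

/-- `f` is a retract of `g` in the arrow category. -/
def MorRetract {X Y X' Y' : C} (f : X ⟶ Y) (g : X' ⟶ Y') : Prop :=
  ∃ (i : X ⟶ X') (r : X' ⟶ X) (j : Y ⟶ Y') (q : Y' ⟶ Y),
    i ≫ r = 𝟙 X ∧ j ≫ q = 𝟙 Y ∧ i ≫ g = f ≫ j ∧ g ≫ q = r ≫ f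

/-- A model category structure on a bicomplete category: classes of weak equivalences,
cofibrations and fibrations satisfying two-out-of-three, retract closure, lifting and
factorization axioms. -/
structure ModelStructure (C : Type u) [Category.{v} C] where
  W : MorphismProperty C
  Cof : MorphismProperty C
  Fib : MorphismProperty C
  hasLimits : HasLimits C
  hasColimits : HasColimits C
  w_comp : ∀ {X Y Z : C} (f : X ⟶ Y) (g : Y ⟶ Z), W f → W g → W (f ≫ g)
  w_cancel_left : ∀ {X Y Z : C} (f : X ⟶ Y) (g : Y ⟶ Z), W f → W (f ≫ g) → W g
  w_cancel_right : ∀ {X Y Z : C} (f : X ⟶ Y) (g : Y ⟶ Z), W g → W (f ≫ g) → W f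
  w_retract : ∀ {X Y X' Y' : C} (f : X ⟶ Y) (g : X' ⟶ Y'), MorRetract f g → W g → W f
  cof_retract : ∀ {X Y X' Y' : C} (f : X ⟶ Y) (g : X' ⟶ Y'), MorRetract f g → Cof g → Cof f
  fib_retract : ∀ {X Y X' Y' : C} (f : X ⟶ Y) (g : X' ⟶ Y'), MorRetract f g → Fib g → Fib f
  lift_cof_trivFib : ∀ {A B X Y : C} (i : A ⟶ B) (p : X ⟶ Y),
    Cof i → Fib p → W p → HasLiftingProperty i p
  lift_trivCof_fib : ∀ {A B X Y : C} (i : A ⟶ B) (p : X ⟶ Y),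
    Cof i → W i → Fib p → HasLiftingProperty i p
  fact_cof_trivFib : ∀ {X Y : C} (f : X ⟶ Y),
    ∃ (Z : C) (i : X ⟶ Z) (p : Z ⟶ Y), Cof i ∧ Fib p ∧ W p ∧ i ≫ p = f
  fact_trivCof_fib : ∀ {X Y : C} (f : X ⟶ Y),
    ∃ (Z : C) (i : X ⟶ Z) (p : Z ⟶ Y), Cof i ∧ W i ∧ Fib p ∧ i ≫ p = f

/-- The class of morphisms with the right lifting property with respect to `T`. -/
def MorRlp (T : MorphismProperty C) : MorphismProperty C :=
  fun _ _ p => ∀ ⦃A B : C⦄ (i : A ⟶ B), T i → HasLiftingProperty i p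

/-- A model structure is cofibrantly generated by a class `I` of generating cofibrations and
a class `J` of generating acyclic cofibrations if the fibrations are exactly the maps with the
right lifting property with respect to `J` and the acyclic fibrations are exactly the maps
with the right lifting property with respect to `I`. -/
structure IsCofibrantlyGenerated (M : ModelStructure C) (I J : MorphismProperty C) : Prop where
  fib_eq : M.Fib = MorRlp J
  trivFib_eq : (fun (X Y : C) (f : X ⟶ Y) => M.W f ∧ M.Fib f) = MorRlp I

/-- An object is cofibrant if the map from an initial object to it is a cofibration. -/
def ModelStructure.Cofibrant (M : ModelStructure C) (A : C) : Prop :=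
  ∀ (Z : C) (h : IsInitial Z), M.Cof (h.to A)

/-- An object is fibrant if the map to a terminal object is a fibration. -/
def ModelStructure.Fibrant (M : ModelStructure C) (A : C) : Prop :=
  ∀ (Z : C) (h : IsTerminal Z), M.Fib (h.from A)

/-- A Quillen adjunction: the right adjoint preserves fibrations and trivial fibrations. -/
structure IsQuillenAdjunction (M : ModelStructure C) (N : ModelStructure D)
    {F : C ⥤ D} {G : D ⥤ C} (adj : F ⊣ G) : Prop where
  fib : ∀ {X Y : D} (f : X ⟶ Y), N.Fib f → M.Fib (G.map f)
  trivFib : ∀ {X Y : D} (f : X ⟶ Y), N.Fib f → N.W f → M.Fib (G.map f) ∧ M.W (G.map f)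

/-- A Quillen equivalence: a Quillen adjunction such that for every cofibrant `A` and
fibrant `X`, a map `F A ⟶ X` is a weak equivalence iff its adjunct is. -/
structure IsQuillenEquivalence (M : ModelStructure C) (N : ModelStructure D)
    {F : C ⥤ D} {G : D ⥤ C} (adj : F ⊣ G) extends IsQuillenAdjunction M N adj : Prop where
  derived : ∀ (A : C) (X : D), M.Cofibrant A → N.Fibrant X →
    ∀ f : F.obj A ⟶ X, N.W f ↔ M.W ((adj.homEquiv A X) f)

end ModelStructures
/-! ## Rank-one components: spheres and discs of bigraded complexes -/

section CondMod

variable (R : Type) [CommRing R]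

/-- The submodule of `R` which is everything if `P` holds and `0` otherwise. -/
def condMod (P : Prop) : Submodule R R := if P then ⊤ else ⊥

variable {R}

lemma condMod_mem {P : Prop} (hP : P) (x : R) : x ∈ condMod R P := by
  unfold condMod
  rw [if_pos hP]
  trivial

lemma condMod_zero_mem (P : Prop) : (0 : R) ∈ condMod R P := Submodule.zero_mem _

lemma condMod_eq_zero {P : Prop} (hP : ¬ P) (x : ↥(condMod R P)) : (x : R) = 0 := by
  have h2 : (x : R) ∈ condMod R P := x.2
  simp only [condMod, if_neg hP, Submodule.mem_bot] at h2
  exact h2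

/-- A "conditional identity" between rank-one conditional modules. -/
def condHom {P Q : Prop} (c : Prop) (h : c → Q) : ↥(condMod R P) →ₗ[R] ↥(condMod R Q) where
  toFun x := ⟨if c then (x : R) else 0, by
    split_ifs with hc
    · exact condMod_mem (h hc) _
    · exact condMod_zero_mem _⟩
  map_add' x y := by
    apply Subtype.ext
    show (if c then ((x : R) + y) else 0) = (if c then (x : R) else 0) + (if c then (y : R) else 0)
    split_ifs <;> simp
  map_smul' a x := by
    apply Subtype.ext
    show (if c then (a • (x : R)) else 0) = a • (if c then (x : R) else 0)
    split_ifs <;> simp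

lemma condHom_apply {P Q : Prop} (c : Prop) (h : c → Q) (x : ↥(condMod R P)) :
    ((condHom c h x : ↥(condMod R Q)) : R) = if c then (x : R) else 0 := rfl

lemma condHom_comp {P Q T : Prop} (c1 c2 : Prop) (h1 : c1 → Q) (h2 : c2 → T) :
    (condHom (R := R) (P := Q) (Q := T) c2 h2).comp (condHom (P := P) c1 h1) =
      condHom (c1 ∧ c2) (fun hc => h2 hc.2) := by
  refine LinearMap.ext fun x => ?_
  apply Subtype.ext
  simp only [LinearMap.comp_apply, condHom_apply]
  split_ifs <;> simp_all

lemma condHom_false {P Q : Prop} (c : Prop) (h : c → Q) (hc : ¬ c) :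
    condHom (R := R) (P := P) (Q := Q) c h = 0 := by
  refine LinearMap.ext fun x => ?_
  apply Subtype.ext
  simp only [condHom_apply, if_neg hc]
  rfl

lemma condHom_congr {P Q : Prop} (c1 c2 : Prop) (h1 : c1 → Q) (h2 : c2 → Q) (e : c1 ↔ c2) :
    condHom (R := R) (P := P) (Q := Q) c1 h1 = condHom c2 h2 := by
  refine LinearMap.ext fun x => ?_
  apply Subtype.ext
  simp only [condHom_apply]
  split_ifs <;> simp_all

end CondMod

section SphereDisc

variable (R : Type) [CommRing R] (r : ℕ) (p n : ℤ)

/-- The sphere: a rank-one free module concentrated in bidegree `(p,n)`. -/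
@[reducible] def sphereBC : BC R r where
  X a b := ↥(condMod R ((a, b) = (p, n)))
  d _ _ _ _ _ _ := 0
  d_comp_d _ _ _ _ _ _ _ _ _ _ := LinearMap.comp_zero _

/-- The disc `𝒴_r(p,n)`: rank-one free modules in bidegrees `(p,n)` and `(p-r, n+1-r)`
with identity differential. -/
@[reducible] def discBC : BC R r where
  X a b := ↥(condMod R ((a, b) = (p, n) ∨ (a, b) = (p - (r : ℤ), n + 1 - (r : ℤ))))
  d a b a' b' h1 h2 := condHom ((a, b) = (p, n)) (by
    intro hc
    right
    rw [Prod.mk.injEq] at hc ⊢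
    omega)
  d_comp_d a b a' b' a'' b'' h1 h2 h3 h4 := by
    rw [condHom_comp]
    apply condHom_false
    rintro ⟨hc1, hc2⟩
    rw [Prod.mk.injEq] at hc1 hc2
    omega

/-- The inclusion of the cycle generator `δ : R^{(p-r,n-r+1)} → 𝒴_r(p,n)`. -/
def deltaBC : sphereBC R r (p - (r : ℤ)) (n + 1 - (r : ℤ)) ⟶ discBC R r p n where
  f a b := condHom ((a, b) = (p - (r : ℤ), n + 1 - (r : ℤ))) (fun hc => Or.inr hc)
  comm a b a' b' h1 h2 := by
    refine LinearMap.ext fun x => ?_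
    simp only [LinearMap.comp_apply]
    have hz : (sphereBC R r (p - (r : ℤ)) (n + 1 - (r : ℤ))).d a b a' b' h1 h2 x = 0 := rfl
    rw [hz, map_zero]
    rw [← LinearMap.comp_apply
      (condHom ((a, b) = (p, n)) _) (condHom ((a, b) = (p - (r : ℤ), n + 1 - (r : ℤ))) _) x]
    rw [condHom_comp]
    rw [condHom_false _ _ (by
      rintro ⟨hc1, hc2⟩
      rw [Prod.mk.injEq] at hc1 hc2
      omega)]
    rfl

end SphereDisc

/-! ## Bicompleteness -/

section Bicomplete

variable (R : Type) [CommRing R] (r : ℕ)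

/-- The complex shape on `ℤ × ℤ` underlying `r`-bigraded complexes. -/
def bcShape : ComplexShape (ℤ × ℤ) where
  Rel i j := j.1 + (r : ℤ) = i.1 ∧ j.2 + (r : ℤ) = i.2 + 1
  next_eq := by
    rintro ⟨a, b⟩ ⟨c, d⟩ ⟨e, f⟩ ⟨h1, h2⟩ ⟨h3, h4⟩
    ext <;> dsimp at * <;> omega
  prev_eq := by
    rintro ⟨a, b⟩ ⟨c, d⟩ ⟨e, f⟩ ⟨h1, h2⟩ ⟨h3, h4⟩
    ext <;> dsimp at * <;> omega

/-- From homological complexes of modules to bigraded complexes. -/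
def fromHC : HomologicalComplex (ModuleCat.{0} R) (bcShape r) ⥤ BC R r where
  obj K :=
    { X := fun p n => K.X (p, n)
      d := fun p n p' n' _ _ => (K.d (p, n) (p', n')).hom
      d_comp_d := fun p n p' n' p'' n'' _ _ _ _ => by
        rw [← ModuleCat.hom_comp, K.d_comp_d]; rfl }
  map φ :=
    { f := fun p n => (φ.f (p, n)).hom
      comm := fun p n p' n' _ _ => by
        dsimp only
        rw [← ModuleCat.hom_comp, ← ModuleCat.hom_comp, φ.comm] }
  map_id K := rfl
  map_comp φ ψ := rfl

instance : (fromHC R r).Faithful where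
  map_injective {K L φ ψ} h := by
    ext ⟨p, n⟩ : 2
    exact congrArg (fun (t : BCHom _ _) => t.f p n) h

instance : (fromHC R r).Full where
  map_surjective {K L} φ := by
    refine ⟨{ f := fun i => ModuleCat.ofHom (BCHom.f φ i.1 i.2), comm' := ?_ }, ?_⟩
    · rintro ⟨p, n⟩ ⟨p', n'⟩ ⟨h1, h2⟩
      ext x
      exact BCHom.comm_apply φ p n p' n' h1 h2 x
    · rfl

instance : (fromHC R r).EssSurj where
  mem_essImage A := by
    let K : HomologicalComplex (ModuleCat.{0} R) (bcShape r) :=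
      { X := fun i => ModuleCat.of R (A.X i.1 i.2)
        d := fun i j => if h : (bcShape r).Rel i j then
          ModuleCat.ofHom (A.d i.1 i.2 j.1 j.2 h.1 h.2) else 0
        shape := fun i j h => dif_neg h
        d_comp_d' := fun i j k h h' => by
          rw [dif_pos h, dif_pos h', ← ModuleCat.ofHom_comp, A.d_comp_d]; rfl }
    have hK : ∀ p n p' n' (h1 : p' + (r : ℤ) = p) (h2 : n' + (r : ℤ) = n + 1),
        (K.d (p, n) (p', n')).hom = A.d p n p' n' h1 h2 := by
      intro p n p' n' h1 h2
      have : K.d (p, n) (p', n') = ModuleCat.ofHom (A.d p n p' n' h1 h2) :=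
        dif_pos (show (bcShape r).Rel (p, n) (p', n') from ⟨h1, h2⟩)
      rw [this]
      rfl
    let e1 : BCHom ((fromHC R r).obj K) A :=
      { f := fun p n => LinearMap.id
        comm := fun p n p' n' h1 h2 => (hK p n p' n' h1 h2).symm }
    let e2 : BCHom A ((fromHC R r).obj K) :=
      { f := fun p n => LinearMap.id
        comm := fun p n p' n' h1 h2 => (hK p n p' n' h1 h2) }
    exact ⟨K, ⟨⟨e1, e2, rfl, rfl⟩⟩⟩

instance : (fromHC R r).IsEquivalence where

lemma bc_hasLimits : HasLimits (BC R r) :=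
  have : HasLimits (HomologicalComplex (ModuleCat.{0} R) (bcShape r)) :=
    ⟨fun _ _ => inferInstance⟩
  Adjunction.has_limits_of_equivalence (fromHC R r).inv

lemma bc_hasColimits : HasColimits (BC R r) :=
  have : HasColimits (HomologicalComplex (ModuleCat.{0} R) (bcShape r)) :=
    ⟨fun _ _ => inferInstance⟩
  Adjunction.has_colimits_of_equivalence (fromHC R r).inv

end Bicomplete

/-! ## Elementwise descriptions of the classes of maps -/

namespace BC

variable {R : Type} [CommRing R] {r : ℕ}

lemma comp_f {A B C : BC R r} (φ : A ⟶ B) (ψ : B ⟶ C) (p n : ℤ) (x : A.X p n) :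
    BCHom.f (φ ≫ ψ) p n x = BCHom.f ψ p n (BCHom.f φ p n x) := rfl

lemma id_f (A : BC R r) (p n : ℤ) (x : A.X p n) : BCHom.f (𝟙 A) p n x = x := rfl

lemma hom_ext' {A B : BC R r} {φ ψ : A ⟶ B}
    (h : ∀ p n x, BCHom.f φ p n x = BCHom.f ψ p n x) : φ = ψ := by
  apply BCHom.ext
  funext p n
  exact LinearMap.ext (h p n)

lemma d_d (A : BC R r) {p n p' n' p'' n'' : ℤ} (h1 : p' + (r : ℤ) = p) (h2 : n' + (r : ℤ) = n + 1)
      (h3 : p'' + (r : ℤ) = p') (h4 : n'' + (r : ℤ) = n' + 1) (x : A.X p n) :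
    A.d p' n' p'' n'' h3 h4 (A.d p n p' n' h1 h2 x) = 0 :=
  congrArg (fun g => g x) (A.d_comp_d p n p' n' p'' n'' h1 h2 h3 h4)

lemma mem_boundaries_iff (A : BC R r) {p n q m : ℤ} (h1 : q + (r : ℤ) = p)
    (h2 : m + (r : ℤ) = n + 1) (x : A.X q m) :
    x ∈ A.boundaries q m ↔ ∃ y, A.d p n q m h1 h2 y = x := by
  obtain rfl : p = q + (r : ℤ) := by omega
  obtain rfl : n = m + (r : ℤ) - 1 := by omega
  rfl

lemma mkH_eq_iff (A : BC R r) {p n : ℤ} (x y : ↥(A.cycles p n)) :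
    A.mkH x = A.mkH y ↔ (x : A.X p n) - y ∈ A.boundaries p n :=
  Submodule.Quotient.eq _

/-- The elementwise lifting condition characterising acyclic fibrations. -/
def Solves {A B : BC R r} (g : A ⟶ B) : Prop :=
  ∀ (p n p' n' : ℤ) (h1 : p' + (r : ℤ) = p) (h2 : n' + (r : ℤ) = n + 1)
    (x : A.X p' n') (y : B.X p n), x ∈ A.cycles p' n' →
    BCHom.f g p' n' x = B.d p n p' n' h1 h2 y →
    ∃ z : A.X p n, A.d p n p' n' h1 h2 z = x ∧ BCHom.f g p n z = y

lemma solves_of_qiso_surj {A B : BC R r} (g : A ⟶ B) (hq : IsQIso g) (hs : IsDegreewiseSurj g) :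
    Solves g := by
  intro p n p' n' h1 h2 x y hx hxy
  have hx0 : A.mkH ⟨x, hx⟩ = A.mkH 0 := by
    apply (hq p' n').1
    rw [BCHom.hMap_mkH, BCHom.hMap_mkH, mkH_eq_iff, map_zero]
    simp only [BCHom.cyclesMap_apply, ZeroMemClass.coe_zero, sub_zero, hxy]
    exact B.d_mem_boundaries h1 h2 y
  rw [mkH_eq_iff, ZeroMemClass.coe_zero, sub_zero, A.mem_boundaries_iff h1 h2] at hx0
  obtain ⟨x', hx'⟩ := hx0
  change A.d p n p' n' h1 h2 x' = x at hx'
  have hc : BCHom.f g p n x' - y ∈ B.cycles p n := by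
    rw [B.mem_cycles_iff h1 h2, map_sub, BCHom.comm_apply, hx', hxy, sub_self]
  obtain ⟨w, hw⟩ := (hq p n).2 (B.mkH ⟨_, hc⟩)
  obtain ⟨z, rfl⟩ := A.mkH_surjective p n w
  rw [BCHom.hMap_mkH, mkH_eq_iff] at hw
  obtain ⟨b, hb⟩ := hw
  obtain ⟨b', rfl⟩ := hs _ _ b
  rw [BCHom.comm_apply] at hb
  simp only [BCHom.cyclesMap_apply] at hb
  refine ⟨x' - z + A.d (p + (r : ℤ)) (n + (r : ℤ) - 1) p n (by ring) (by ring) b', ?_, ?_⟩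
  · rw [map_add, map_sub, d_d, hx', (A.mem_cycles_iff h1 h2 _).1 z.2]
    simp
  · rw [map_add, map_sub, hb]
    abel

lemma Solves.cycles {A B : BC R r} {g : A ⟶ B} (h : Solves g) {p n : ℤ} (y : B.X p n)
    (hy : y ∈ B.cycles p n) : ∃ z ∈ A.cycles p n, BCHom.f g p n z = y := by
  obtain ⟨z, hz, hz'⟩ := h p n (p - r) (n + 1 - r) (by ring) (by ring) 0 y
    (Submodule.zero_mem _) (by rw [map_zero]; exact hy.symm)
  exact ⟨z, hz, hz'⟩

lemma Solves.surj {A B : BC R r} {g : A ⟶ B} (h : Solves g) : IsDegreewiseSurj g := by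
  intro p n y
  obtain ⟨x, hx, hxy⟩ := h.cycles
    (B.d p n (p - r) (n + 1 - r) (by ring) (by ring) y) (B.d_mem_cycles _ _ _)
  obtain ⟨z, -, hz⟩ := h p n _ _ _ _ x y hx hxy
  exact ⟨z, hz⟩

lemma Solves.qiso {A B : BC R r} {g : A ⟶ B} (h : Solves g) : IsQIso g := by
  intro p n
  refine ⟨(injective_iff_map_eq_zero _).2 ?_, ?_⟩
  · intro w hw
    obtain ⟨x, rfl⟩ := A.mkH_surjective p n w
    rw [BCHom.hMap_mkH, ← mkH_zero, mkH_eq_iff, ZeroMemClass.coe_zero, sub_zero] at hw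
    obtain ⟨y, hy⟩ := hw
    obtain ⟨z, hz, -⟩ := h _ _ p n _ _ (x : A.X p n) y x.2 hy.symm
    apply mkH_eq_zero
    rw [← hz]
    exact A.d_mem_boundaries _ _ _
  · intro w
    obtain ⟨y, rfl⟩ := B.mkH_surjective p n w
    obtain ⟨z, hz, hzy⟩ := h.cycles (y : B.X p n) y.2
    exact ⟨A.mkH ⟨z, hz⟩, congrArg B.mkH (Subtype.ext hzy)⟩

lemma solves_iff {A B : BC R r} (g : A ⟶ B) : Solves g ↔ IsQIso g ∧ IsDegreewiseSurj g :=
  ⟨fun h => ⟨h.qiso, h.surj⟩, fun h => solves_of_qiso_surj g h.1 h.2⟩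

end BC

/-! ## Maps out of discs and spheres -/

section DiscMaps

variable {R : Type} [CommRing R] {r : ℕ}

/-- Scalar multiples of an element, as a map from a conditional rank-one module. -/
def condSpan {M : Type} [AddCommGroup M] [Module R M] (P : Prop) (m : M) :
    ↥(condMod R P) →ₗ[R] M :=
  (LinearMap.toSpanSingleton R M m).comp (Submodule.subtype _)

lemma condSpan_apply {M : Type} [AddCommGroup M] [Module R M] (P : Prop) (m : M)
    (s : ↥(condMod R P)) : condSpan P m s = (s : R) • m := rfl

/-- The value at bidegree `(a,b)` of the family supported at `(p,n)` with value `z`. -/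
def supp (A : BC R r) {p n : ℤ} (z : A.X p n) (a b : ℤ) : A.X a b :=
  if h : p = a ∧ n = b then A.cst h.1 h.2 z else 0

lemma supp_self (A : BC R r) {p n : ℤ} (z : A.X p n) : supp A z p n = z := by
  unfold supp
  rw [dif_pos ⟨rfl, rfl⟩]
  rfl

lemma supp_ne (A : BC R r) {p n : ℤ} (z : A.X p n) {a b : ℤ} (h : ¬ (p = a ∧ n = b)) :
    supp A z a b = 0 := dif_neg h

/-- The map out of the sphere given by a cycle. -/
def sphereHom (A : BC R r) {p n : ℤ} (z : A.X p n) (hz : z ∈ A.cycles p n) :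
    sphereBC R r p n ⟶ A where
  f a b := condSpan _ (supp A z a b)
  comm a b a' b' h1 h2 := by
    refine LinearMap.ext fun s => ?_
    change A.d a b a' b' h1 h2 ((s : R) • supp A z a b) = (0 : R) • _
    rw [map_smul, zero_smul]
    by_cases h : p = a ∧ n = b
    · obtain ⟨rfl, rfl⟩ := h
      rw [supp_self, (A.mem_cycles_iff h1 h2 z).1 hz, smul_zero]
    · rw [supp_ne _ _ h, map_zero, smul_zero]

/-- The map out of the disc given by an element. -/
def discHom (A : BC R r) {p n : ℤ} (z : A.X p n) : discBC R r p n ⟶ A where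
  f a b := condSpan _ (supp A z a b +
    supp A (A.d p n (p - (r : ℤ)) (n + 1 - (r : ℤ)) (by ring) (by ring) z) a b)
  comm a b a' b' h1 h2 := by
    refine LinearMap.ext fun s => ?_
    simp only [LinearMap.comp_apply, condSpan_apply, condHom_apply]
    rw [map_smul, map_add]
    by_cases h : (a, b) = (p, n)
    · rw [if_pos h]
      obtain ⟨rfl, rfl⟩ := Prod.mk.injEq .. ▸ h
      obtain rfl : a' = a - r := by omega
      obtain rfl : b' = b + 1 - r := by omega
      rw [supp_self, supp_self, supp_ne (a := a) (b := b) _ _ (by omega),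
        supp_ne (a := a - r) _ _ (by omega)]
      simp
    · rw [if_neg h, zero_smul]
      rw [Prod.mk.injEq] at h
      rw [supp_ne (a := a) (b := b) A z (by omega), map_zero, zero_add]
      by_cases h' : p - (r : ℤ) = a ∧ n + 1 - (r : ℤ) = b
      · obtain ⟨rfl, rfl⟩ := h'
        rw [supp_self, BC.d_d, smul_zero]
      · rw [supp_ne _ _ h', map_zero, smul_zero]

/-- The generator of the disc. -/
def discGen (R : Type) [CommRing R] (r : ℕ) (p n : ℤ) : (discBC R r p n).X p n :=
  ⟨1, condMod_mem (Or.inl rfl) _⟩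

/-- The generator of the sphere. -/
def sphereGen (R : Type) [CommRing R] (r : ℕ) (p n : ℤ) : (sphereBC R r p n).X p n :=
  ⟨1, condMod_mem rfl _⟩

lemma discHom_gen (A : BC R r) {p n : ℤ} (z : A.X p n) :
    BCHom.f (discHom A z) p n (discGen R r p n) = z := by
  change (1 : R) • (supp A z p n + supp A _ p n) = z
  rw [supp_self, supp_ne _ _ (by omega), add_zero, one_smul]

lemma sphereHom_gen (A : BC R r) {p n : ℤ} (z : A.X p n) (hz : z ∈ A.cycles p n) :
    BCHom.f (sphereHom A z hz) p n (sphereGen R r p n) = z := by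
  change (1 : R) • (supp A z p n) = z
  rw [supp_self, one_smul]

lemma condHom_true {P Q c : Prop} (hc : c) (h : c → Q) (x : ↥(condMod R P)) :
    ((condHom c h x : ↥(condMod R Q)) : R) = x := by
  rw [condHom_apply, if_pos hc]

lemma d_discGen_coe (p n : ℤ) (h1 : p - (r : ℤ) + r = p) (h2 : n + 1 - (r : ℤ) + r = n + 1) :
    (((discBC R r p n).d p n (p - (r : ℤ)) (n + 1 - (r : ℤ)) h1 h2 (discGen R r p n) :
      ↥(condMod R ((p - (r : ℤ), n + 1 - (r : ℤ)) = (p, n) ∨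
        (p - (r : ℤ), n + 1 - (r : ℤ)) = (p - (r : ℤ), n + 1 - (r : ℤ))))) : R) = 1 :=
  condHom_true (c := (p, n) = (p, n)) rfl (fun _ => Or.inr rfl) (discGen R r p n)

lemma d_discGen (p n : ℤ) (h1 : p - (r : ℤ) + r = p) (h2 : n + 1 - (r : ℤ) + r = n + 1) :
    (discBC R r p n).d p n (p - (r : ℤ)) (n + 1 - (r : ℤ)) h1 h2 (discGen R r p n) =
      BCHom.f (deltaBC R r p n) _ _ (sphereGen R r _ _) := by
  apply Subtype.ext
  rw [d_discGen_coe]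
  exact (condHom_true rfl (fun hc => Or.inr hc) (sphereGen R r _ _)).symm

lemma sphere_hom_ext {A : BC R r} {p n : ℤ} {φ ψ : sphereBC R r p n ⟶ A}
    (h : BCHom.f φ p n (sphereGen R r p n) = BCHom.f ψ p n (sphereGen R r p n)) : φ = ψ := by
  apply BC.hom_ext'
  intro a b s
  by_cases hc : (a, b) = (p, n)
  · obtain ⟨rfl, rfl⟩ := Prod.mk.injEq .. ▸ hc
    have hs : s = (s : R) • sphereGen R r a b := by
      apply Subtype.ext
      change (s : R) = (s : R) * 1
      rw [mul_one]
    rw [hs, map_smul, map_smul, h]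
  · have hs : s = 0 := Subtype.ext (condMod_eq_zero hc s)
    rw [hs, map_zero, map_zero]

lemma disc_hom_ext {A : BC R r} {p n : ℤ} {φ ψ : discBC R r p n ⟶ A}
    (h : BCHom.f φ p n (discGen R r p n) = BCHom.f ψ p n (discGen R r p n)) : φ = ψ := by
  apply BC.hom_ext'
  intro a b s
  by_cases hc : (a, b) = (p, n)
  · obtain ⟨rfl, rfl⟩ := Prod.mk.injEq .. ▸ hc
    have hs : s = (s : R) • discGen R r a b := by
      apply Subtype.ext
      change (s : R) = (s : R) * 1
      rw [mul_one]
    rw [hs, map_smul, map_smul, h]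
  by_cases hc' : (a, b) = (p - (r : ℤ), n + 1 - (r : ℤ))
  · obtain ⟨rfl, rfl⟩ := Prod.mk.injEq .. ▸ hc'
    have hs : s = (s : R) • (discBC R r p n).d p n (p - (r : ℤ)) (n + 1 - (r : ℤ))
        (by ring) (by ring) (discGen R r p n) := by
      apply Subtype.ext
      exact (mul_one (s : R)).symm.trans
        (congrArg (fun t => (s : R) * t) (d_discGen_coe p n _ _).symm)
    rw [hs, map_smul, map_smul, ← BCHom.comm_apply, ← BCHom.comm_apply, h]
  · have hs : s = 0 := Subtype.ext (condMod_eq_zero (by tauto) s)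
    rw [hs, map_zero, map_zero]

lemma sphereGen_mem_cycles (p n : ℤ) :
    sphereGen R r p n ∈ (sphereBC R r p n).cycles p n := rfl

/-- Lifting against `δ` is the elementwise solvability condition. -/
lemma solves_iff_delta {A B : BC R r} (g : A ⟶ B) :
    BC.Solves g ↔ ∀ p n, HasLiftingProperty (deltaBC R r p n) g := by
  constructor
  · intro h p n
    refine ⟨fun {u v} sq => ?_⟩
    have hw := sq.w
    obtain ⟨z, hz, hz'⟩ := h p n (p - (r : ℤ)) (n + 1 - (r : ℤ)) (by ring) (by ring)
      (BCHom.f u _ _ (sphereGen R r _ _)) (BCHom.f v _ _ (discGen R r p n))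
      (BCHom.map_cycles _ _ _ (sphereGen_mem_cycles _ _)) (by
        rw [BCHom.comm_apply, d_discGen, ← BC.comp_f, ← BC.comp_f, hw])
    refine ⟨⟨⟨discHom A z, ?_, ?_⟩⟩⟩
    · apply sphere_hom_ext
      rw [BC.comp_f, ← d_discGen _ _ (by ring) (by ring), ← BCHom.comm_apply, discHom_gen, hz]
    · apply disc_hom_ext
      rw [BC.comp_f, discHom_gen, hz']
  · intro h p n p' n' h1 h2 x y hx hxy
    obtain rfl : p' = p - r := by omega
    obtain rfl : n' = n + 1 - r := by omega
    have := h p n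
    have sq : CommSq (sphereHom A x hx) (deltaBC R r p n) g (discHom B y) := ⟨by
      apply sphere_hom_ext
      rw [BC.comp_f, BC.comp_f, sphereHom_gen, hxy, ← d_discGen _ _ h1 h2,
        ← BCHom.comm_apply, discHom_gen]⟩
    refine ⟨BCHom.f sq.lift p n (discGen R r p n), ?_, ?_⟩
    · rw [BCHom.comm_apply, d_discGen, ← BC.comp_f, sq.fac_left, sphereHom_gen]
    · rw [← BC.comp_f, sq.fac_right, discHom_gen]

/-- The zero complex. -/
def zeroBC (R : Type) [CommRing R] (r : ℕ) : BC R r where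
  X _ _ := PUnit
  d _ _ _ _ _ _ := 0
  d_comp_d _ _ _ _ _ _ _ _ _ _ := rfl

lemma zeroBC_isZero : IsZero (zeroBC R r) where
  unique_to B := ⟨⟨⟨⟨fun _ _ => 0, fun _ _ _ _ _ _ => by simp⟩⟩,
    fun φ => BC.hom_ext' fun p n x => by
      have : x = 0 := rfl
      rw [this, map_zero, map_zero]⟩⟩
  unique_from B := ⟨⟨⟨⟨fun _ _ => 0, fun _ _ _ _ _ _ => by simp⟩⟩,
    fun φ => BC.hom_ext' fun p n x => rfl⟩⟩

lemma surj_eq_rlp : BC.degreewiseSurj R r = MorRlp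
    (fun A B _ => IsZero A ∧ ∃ p n : ℤ, Nonempty (B ≅ discBC R r p n)) := by
  funext X Y g
  apply propext
  constructor
  · rintro h A B i ⟨hA, p, n, ⟨e⟩⟩
    refine ⟨fun {u v} sq => ?_⟩
    obtain ⟨x, hx⟩ := h p n (BCHom.f (e.inv ≫ v) p n (discGen R r p n))
    refine ⟨⟨⟨e.hom ≫ discHom X x, hA.eq_of_src _ _, ?_⟩⟩⟩
    rw [Category.assoc, ← Iso.eq_inv_comp]
    apply disc_hom_ext
    rw [BC.comp_f, discHom_gen, hx]
  · intro h p n y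
    have := h (zeroBC_isZero.to_ (discBC R r p n)) ⟨zeroBC_isZero, p, n, ⟨Iso.refl _⟩⟩
    have sq : CommSq (zeroBC_isZero.to_ X) (zeroBC_isZero.to_ (discBC R r p n)) g
      (discHom Y y) := ⟨zeroBC_isZero.eq_of_src _ _⟩
    refine ⟨BCHom.f sq.lift p n (discGen R r p n), ?_⟩
    rw [← BC.comp_f, sq.fac_right, discHom_gen]

lemma trivFib_eq_rlp : (fun (X Y : BC R r) (f : X ⟶ Y) =>
      BC.qIso R r f ∧ BC.degreewiseSurj R r f) = MorRlp
    (fun _ _ f => ∃ p n : ℤ, Nonempty (Arrow.mk f ≅ Arrow.mk (deltaBC R r p n))) := by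
  funext X Y g
  apply propext
  change (BC.IsQIso g ∧ BC.IsDegreewiseSurj g) ↔ _
  rw [← BC.solves_iff, solves_iff_delta]
  constructor
  · rintro h A B i ⟨p, n, ⟨e⟩⟩
    exact (HasLiftingProperty.iff_of_arrow_iso_left e g).2 (h p n)
  · intro h p n
    exact h _ ⟨p, n, ⟨Iso.refl _⟩⟩

end DiscMaps

/-! ## The two factorizations -/

section Factorizations

variable {R : Type} [CommRing R] {r : ℕ}

/-- `X` plus the free sum of discs on the elements of `Y`. -/
def addDiscs (X Y : BC R r) : BC R r where
  X p n := X.X p n × ((Y.X p n →₀ R) × (Y.X (p + r) (n + r - 1) →₀ R))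
  d p n p' n' h1 h2 := ((X.d p n p' n' h1 h2).comp (LinearMap.fst R _ _)).prod
    (LinearMap.prod 0 ((Finsupp.lmapDomain R R
      (Y.cst (show p = p' + r by omega) (show n = n' + r - 1 by omega))).comp
      ((LinearMap.fst R _ _).comp (LinearMap.snd R _ _))))
  d_comp_d p n p' n' p'' n'' h1 h2 h3 h4 := by
    refine LinearMap.ext fun z => ?_
    refine Prod.ext ?_ (Prod.ext rfl ?_)
    · exact X.d_d h1 h2 h3 h4 z.1
    · exact Finsupp.mapDomain_zero
        (f := Y.cst (show p' = p'' + r by omega) (show n' = n'' + r - 1 by omega))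

lemma addDiscs_d (X Y : BC R r) {p n p' n' : ℤ} (h1 : p' + (r : ℤ) = p)
    (h2 : n' + (r : ℤ) = n + 1) (x : X.X p n) (a : Y.X p n →₀ R)
    (b : Y.X (p + r) (n + r - 1) →₀ R) :
    (addDiscs X Y).d p n p' n' h1 h2 (x, a, b) = (X.d p n p' n' h1 h2 x, 0,
      Finsupp.mapDomain (Y.cst (show p = p' + r by omega) (show n = n' + r - 1 by omega)) a) :=
  rfl

/-- The inclusion of `X`. -/
def addDiscsInl (X Y : BC R r) : X ⟶ addDiscs X Y where
  f p n := LinearMap.inl R _ _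
  comm p n p' n' h1 h2 := by
    refine LinearMap.ext fun x => ?_
    refine Prod.ext rfl (Prod.ext rfl ?_)
    exact Finsupp.mapDomain_zero
      (f := Y.cst (show p = p' + r by omega) (show n = n' + r - 1 by omega))

/-- The universal property of `addDiscs`. -/
def addDiscsDesc {X Y A : BC R r} (u : X ⟶ A) (z : ∀ p n, Y.X p n → A.X p n) :
    addDiscs X Y ⟶ A where
  f p n := (BCHom.f u p n).coprod ((Finsupp.linearCombination R (z p n)).coprod
    (Finsupp.linearCombination R
      (fun y => A.d (p + r) (n + r - 1) p n (by ring) (by ring) (z _ _ y))))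
  comm p n p' n' h1 h2 := by
    obtain rfl : p = p' + r := by omega
    obtain rfl : n = n' + r - 1 := by omega
    refine LinearMap.ext ?_
    rintro ⟨x, a, b⟩
    have e1 : A.d (p' + r) (n' + r - 1) p' n' h1 h2
        (Finsupp.linearCombination R (z (p' + r) (n' + r - 1)) a) =
        Finsupp.linearCombination R (fun y => A.d (p' + r) (n' + r - 1) p' n' h1 h2 (z _ _ y)) a :=
      Finsupp.apply_linearCombination R _ _ a
    have e2 : A.d (p' + r) (n' + r - 1) p' n' h1 h2
        (Finsupp.linearCombination R (fun y => A.d (p' + r + r) (n' + r - 1 + r - 1)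
          (p' + r) (n' + r - 1) (by ring) (by ring) (z _ _ y)) b) = 0 := by
      rw [Finsupp.apply_linearCombination]
      have : (A.d (p' + r) (n' + r - 1) p' n' h1 h2) ∘ (fun y => A.d (p' + r + r)
          (n' + r - 1 + r - 1) (p' + r) (n' + r - 1) (by ring) (by ring) (z _ _ y)) =
          (0 : Y.X (p' + r + r) (n' + r - 1 + r - 1) → _) := by
        funext y
        exact A.d_d _ _ _ _ _
      rw [this]
      simp
    have e3 : Finsupp.mapDomain (Y.cst (rfl : p' + (r : ℤ) = p' + r)
        (rfl : n' + (r : ℤ) - 1 = n' + r - 1)) a = a := Finsupp.mapDomain_id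
    change A.d (p' + r) (n' + r - 1) p' n' h1 h2 (BCHom.f u (p' + r) (n' + r - 1) x +
      (Finsupp.linearCombination R (z (p' + r) (n' + r - 1)) a +
       Finsupp.linearCombination R (fun y => A.d (p' + r + r) (n' + r - 1 + r - 1)
          (p' + r) (n' + r - 1) (by ring) (by ring) (z _ _ y)) b)) =
      BCHom.f u p' n' (X.d (p' + r) (n' + r - 1) p' n' h1 h2 x) +
      (Finsupp.linearCombination R (z p' n') 0 +
       Finsupp.linearCombination R (fun y => A.d (p' + r) (n' + r - 1) p' n' h1 h2 (z _ _ y))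
        (Finsupp.mapDomain (Y.cst (rfl : p' + (r : ℤ) = p' + r)
        (rfl : n' + (r : ℤ) - 1 = n' + r - 1)) a))
    rw [e3, map_add, map_add, e1, e2, map_zero, BCHom.comm_apply, add_zero, zero_add]

lemma addDiscsInl_desc {X Y A : BC R r} (u : X ⟶ A) (z : ∀ p n, Y.X p n → A.X p n) :
    addDiscsInl X Y ≫ addDiscsDesc u z = u := by
  apply BC.hom_ext'
  intro p n x
  change BCHom.f u p n x + (Finsupp.linearCombination R (z p n) 0 + Finsupp.linearCombination R
    (fun y => A.d (p + r) (n + r - 1) p n (by ring) (by ring) (z _ _ y)) 0) = _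
  rw [map_zero, map_zero, add_zero, add_zero]

/-- The generator of `addDiscs` attached to `y`. -/
def addDiscsGen (X : BC R r) {Y : BC R r} {p n : ℤ} (y : Y.X p n) : (addDiscs X Y).X p n :=
  (0, Finsupp.single y 1, 0)

lemma addDiscsDesc_gen {X Y A : BC R r} (u : X ⟶ A) (z : ∀ p n, Y.X p n → A.X p n)
    {p n : ℤ} (y : Y.X p n) :
    BCHom.f (addDiscsDesc u z) p n (addDiscsGen X y) = z p n y := by
  change BCHom.f u p n 0 + (Finsupp.linearCombination R (z p n) (Finsupp.single y 1) +
    Finsupp.linearCombination R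
    (fun y => A.d (p + r) (n + r - 1) p n (by ring) (by ring) (z _ _ y)) 0) = _
  rw [map_zero, map_zero, add_zero, zero_add, Finsupp.linearCombination_single, one_smul]

lemma addDiscs_hom_ext {X Y A : BC R r} {φ ψ : addDiscs X Y ⟶ A}
    (h : addDiscsInl X Y ≫ φ = addDiscsInl X Y ≫ ψ)
    (h' : ∀ p n (y : Y.X p n), BCHom.f φ p n (addDiscsGen X y) =
      BCHom.f ψ p n (addDiscsGen X y)) : φ = ψ := by
  apply BCHom.ext
  funext p n
  refine LinearMap.prod_ext ?_ (LinearMap.prod_ext ?_ ?_)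
  · exact congrArg (fun (t : BCHom _ _) => t.f p n) h
  · apply Finsupp.lhom_ext'
    intro y
    apply LinearMap.ext_ring
    exact h' p n y
  · apply Finsupp.lhom_ext'
    intro y
    apply LinearMap.ext_ring
    have key : ((0, 0, Finsupp.single y 1) : (addDiscs X Y).X p n) =
        (addDiscs X Y).d (p + r) (n + r - 1) p n (by ring) (by ring) (addDiscsGen X y) := by
      rw [addDiscsGen, addDiscs_d, map_zero]
      refine Prod.ext rfl (Prod.ext rfl ?_)
      exact Finsupp.mapDomain_id.symm
    change BCHom.f φ p n (0, 0, Finsupp.single y 1) = BCHom.f ψ p n (0, 0, Finsupp.single y 1)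
    rw [key, ← BCHom.comm_apply, ← BCHom.comm_apply, h']

lemma addDiscsInl_llp (X Y : BC R r) {A B : BC R r} (g : A ⟶ B) (hg : BC.IsDegreewiseSurj g) :
    HasLiftingProperty (addDiscsInl X Y) g := by
  refine ⟨fun {u v} sq => ?_⟩
  choose z hz using fun p n (y : Y.X p n) => hg p n (BCHom.f v p n (addDiscsGen X y))
  refine ⟨⟨⟨addDiscsDesc u z, addDiscsInl_desc _ _, ?_⟩⟩⟩
  apply addDiscs_hom_ext
  · rw [← Category.assoc, addDiscsInl_desc, sq.w]
  · intro p n y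
    rw [BC.comp_f, addDiscsDesc_gen, hz]

lemma addDiscsInl_qiso (X Y : BC R r) : BC.IsQIso (addDiscsInl X Y) := by
  intro p n
  refine ⟨(injective_iff_map_eq_zero _).2 ?_, ?_⟩
  · intro w hw
    obtain ⟨x, rfl⟩ := X.mkH_surjective p n w
    rw [BCHom.hMap_mkH, ← BC.mkH_zero, BC.mkH_eq_iff, ZeroMemClass.coe_zero, sub_zero] at hw
    obtain ⟨⟨x', a, b⟩, hy⟩ := hw
    exact X.mkH_eq_zero _ ⟨x', congrArg Prod.fst hy⟩
  · intro w
    obtain ⟨⟨⟨x, a, b⟩, hz⟩, rfl⟩ := (addDiscs X Y).mkH_surjective p n w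
    have hz' : (addDiscs X Y).d p n (p - r) (n + 1 - r) (by ring) (by ring) (x, a, b) = 0 := hz
    rw [addDiscs_d] at hz'
    have hx : x ∈ X.cycles p n := congrArg Prod.fst hz'
    have ha : a = 0 := by
      have h0 := congrArg (fun t => t.2.2) hz'
      refine Finsupp.mapDomain_injective (Y.cst_inj _ _) (h0.trans ?_)
      exact Finsupp.mapDomain_zero.symm
    subst ha
    refine ⟨X.mkH ⟨x, hx⟩, ?_⟩
    rw [BCHom.hMap_mkH, BC.mkH_eq_iff]
    refine ⟨(0, -b, 0), ?_⟩
    rw [addDiscs_d, map_zero]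
    refine Prod.ext (sub_self x).symm (Prod.ext (sub_self (0 : Y.X p n →₀ R)).symm ?_)
    refine Eq.trans ?_ (zero_sub b).symm
    exact Finsupp.mapDomain_id

lemma fact_discs {X Y : BC R r} (f : X ⟶ Y) : ∃ (Z : BC R r) (i : X ⟶ Z) (p : Z ⟶ Y),
    BC.IsQIso i ∧ (∀ {A B : BC R r} (g : A ⟶ B), BC.IsDegreewiseSurj g → HasLiftingProperty i g) ∧
    BC.IsDegreewiseSurj p ∧ i ≫ p = f :=
  ⟨addDiscs X Y, addDiscsInl X Y, addDiscsDesc f (fun _ _ y => y), addDiscsInl_qiso X Y,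
    fun g hg => addDiscsInl_llp X Y g hg,
    fun _ _ y => ⟨addDiscsGen X y, addDiscsDesc_gen _ _ y⟩, addDiscsInl_desc _ _⟩

/-! ### Attaching cells -/

/-- The lifting problems of `g` in bidegree `(p,n)`. -/
def Cells {Z Y : BC R r} (g : Z ⟶ Y) (p n : ℤ) : Type :=
  {t : Z.X (p - r) (n + 1 - r) × Y.X p n // t.1 ∈ Z.cycles (p - r) (n + 1 - r) ∧
    BCHom.f g _ _ t.1 = Y.d p n (p - r) (n + 1 - r) (by ring) (by ring) t.2}

/-- The boundary of a combination of cells. -/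
def cellBd {Z Y : BC R r} (g : Z ⟶ Y) (p n p' n' : ℤ) (h1 : p' + (r : ℤ) = p)
    (h2 : n' + (r : ℤ) = n + 1) : (Cells g p n →₀ R) →ₗ[R] Z.X p' n' :=
  Finsupp.linearCombination R
    (fun t => Z.cst (show p - r = p' by omega) (show n + 1 - r = n' by omega) t.1.1)

/-- Attach all the cells. -/
def attach {Z Y : BC R r} (g : Z ⟶ Y) : BC R r where
  X p n := Z.X p n × (Cells g p n →₀ R)
  d p n p' n' h1 h2 :=
    ((Z.d p n p' n' h1 h2).coprod (cellBd g p n p' n' h1 h2)).prod 0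
  d_comp_d p n p' n' p'' n'' h1 h2 h3 h4 := by
    refine LinearMap.prod_ext ?_ (Finsupp.lhom_ext' fun t => LinearMap.ext_ring ?_)
    · refine LinearMap.ext fun z => Prod.ext ?_ rfl
      change Z.d p' n' p'' n'' h3 h4 (Z.d p n p' n' h1 h2 z + cellBd g p n p' n' h1 h2 0) +
        cellBd g p' n' p'' n'' h3 h4 0 = 0
      rw [map_zero, map_zero, add_zero, add_zero, BC.d_d]
    · refine Prod.ext ?_ rfl
      change Z.d p' n' p'' n'' h3 h4 (Z.d p n p' n' h1 h2 0 +
        cellBd g p n p' n' h1 h2 (Finsupp.single t 1)) +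
        cellBd g p' n' p'' n'' h3 h4 0 = 0
      rw [map_zero, map_zero, add_zero, zero_add, cellBd, Finsupp.linearCombination_single,
        one_smul]
      exact (Z.mem_cycles_iff h3 h4 _).1 (Z.cst_mem_cycles _ _ t.2.1)

lemma attach_d {Z Y : BC R r} (g : Z ⟶ Y) {p n p' n' : ℤ} (h1 : p' + (r : ℤ) = p)
    (h2 : n' + (r : ℤ) = n + 1) (z : Z.X p n) (s : Cells g p n →₀ R) :
    (attach g).d p n p' n' h1 h2 (z, s) =
      (Z.d p n p' n' h1 h2 z + cellBd g p n p' n' h1 h2 s, 0) := rfl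

/-- The inclusion. -/
def attachInl {Z Y : BC R r} (g : Z ⟶ Y) : Z ⟶ attach g where
  f p n := LinearMap.inl R _ _
  comm p n p' n' h1 h2 := by
    refine LinearMap.ext fun x => ?_
    refine Prod.ext ?_ rfl
    change Z.d p n p' n' h1 h2 x + cellBd g p n p' n' h1 h2 0 = Z.d p n p' n' h1 h2 x
    rw [map_zero, add_zero]

/-- The generator attached to a cell. -/
def attachGen {Z Y : BC R r} {g : Z ⟶ Y} {p n : ℤ} (t : Cells g p n) : (attach g).X p n :=
  (0, Finsupp.single t 1)

lemma d_attachGen {Z Y : BC R r} {g : Z ⟶ Y} {p n : ℤ} (t : Cells g p n) :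
    (attach g).d p n (p - r) (n + 1 - r) (by ring) (by ring) (attachGen t) =
      BCHom.f (attachInl g) _ _ t.1.1 := by
  rw [attachGen, attach_d, map_zero, zero_add, cellBd, Finsupp.linearCombination_single, one_smul]
  rfl

/-- The universal property of `attach`. -/
def attachDesc {Z Y A : BC R r} (g : Z ⟶ Y) (u : Z ⟶ A) (e : ∀ p n, Cells g p n → A.X p n)
    (he : ∀ p n (t : Cells g p n), A.d p n (p - r) (n + 1 - r) (by ring) (by ring) (e p n t) =
      BCHom.f u _ _ t.1.1) : attach g ⟶ A where
  f p n := (BCHom.f u p n).coprod (Finsupp.linearCombination R (e p n))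
  comm p n p' n' h1 h2 := by
    obtain rfl : p' = p - r := by omega
    obtain rfl : n' = n + 1 - r := by omega
    refine LinearMap.prod_ext ?_ (Finsupp.lhom_ext' fun t => LinearMap.ext_ring ?_)
    · refine LinearMap.ext fun z => ?_
      change A.d p n (p - r) (n + 1 - r) h1 h2 (BCHom.f u p n z +
        Finsupp.linearCombination R (e p n) 0) =
        BCHom.f u (p - r) (n + 1 - r) (Z.d p n (p - r) (n + 1 - r) h1 h2 z +
          cellBd g p n (p - r) (n + 1 - r) h1 h2 0) +
        Finsupp.linearCombination R (e (p - r) (n + 1 - r)) 0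
      rw [map_zero, map_zero, map_zero, add_zero, add_zero, add_zero, BCHom.comm_apply]
    · change A.d p n (p - r) (n + 1 - r) h1 h2 (BCHom.f u p n 0 +
        Finsupp.linearCombination R (e p n) (Finsupp.single t 1)) =
        BCHom.f u (p - r) (n + 1 - r) (Z.d p n (p - r) (n + 1 - r) h1 h2 0 +
          cellBd g p n (p - r) (n + 1 - r) h1 h2 (Finsupp.single t 1)) +
        Finsupp.linearCombination R (e (p - r) (n + 1 - r)) 0
      rw [map_zero, map_zero, map_zero, zero_add, add_zero, zero_add,
        Finsupp.linearCombination_single, one_smul, he, cellBd,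
        Finsupp.linearCombination_single, one_smul]
      rfl

lemma attachInl_desc {Z Y A : BC R r} (g : Z ⟶ Y) (u : Z ⟶ A)
    (e : ∀ p n, Cells g p n → A.X p n) (he) :
    attachInl g ≫ attachDesc g u e he = u := by
  apply BC.hom_ext'
  intro p n x
  change BCHom.f u p n x + Finsupp.linearCombination R (e p n) 0 = _
  rw [map_zero, add_zero]

lemma attachDesc_gen {Z Y A : BC R r} (g : Z ⟶ Y) (u : Z ⟶ A)
    (e : ∀ p n, Cells g p n → A.X p n) (he) {p n : ℤ} (t : Cells g p n) :
    BCHom.f (attachDesc g u e he) p n (attachGen t) = e p n t := by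
  change BCHom.f u p n 0 + Finsupp.linearCombination R (e p n) (Finsupp.single t 1) = _
  rw [map_zero, zero_add, Finsupp.linearCombination_single, one_smul]

lemma attach_hom_ext {Z Y A : BC R r} {g : Z ⟶ Y} {φ ψ : attach g ⟶ A}
    (h : attachInl g ≫ φ = attachInl g ≫ ψ)
    (h' : ∀ p n (t : Cells g p n), BCHom.f φ p n (attachGen t) = BCHom.f ψ p n (attachGen t)) :
    φ = ψ := by
  apply BCHom.ext
  funext p n
  refine LinearMap.prod_ext ?_ (Finsupp.lhom_ext' fun t => LinearMap.ext_ring ?_)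
  · exact congrArg (fun (t : BCHom _ _) => t.f p n) h
  · exact h' p n t

lemma attachInl_llp {Z Y : BC R r} (q : Z ⟶ Y) {A B : BC R r} (g : A ⟶ B) (hg : BC.Solves g) :
    HasLiftingProperty (attachInl q) g := by
  refine ⟨fun {u v} sq => ?_⟩
  have key : ∀ p n (t : Cells q p n), ∃ z : A.X p n,
      A.d p n (p - r) (n + 1 - r) (by ring) (by ring) z = BCHom.f u _ _ t.1.1 ∧
      BCHom.f g p n z = BCHom.f v p n (attachGen t) := by
    intro p n t
    refine hg p n _ _ _ _ _ _ (BCHom.map_cycles _ _ _ t.2.1) ?_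
    rw [BCHom.comm_apply, d_attachGen, ← BC.comp_f, ← BC.comp_f, sq.w]
  choose e he he' using key
  refine ⟨⟨⟨attachDesc q u e he, attachInl_desc _ _ _ _, ?_⟩⟩⟩
  apply attach_hom_ext
  · rw [← Category.assoc, attachInl_desc, sq.w]
  · intro p n t
    rw [BC.comp_f, attachDesc_gen, he']

/-- The extension of `g` to the complex with cells attached. -/
def attachMap {Z Y : BC R r} (g : Z ⟶ Y) : attach g ⟶ Y :=
  attachDesc g g (fun _ _ t => t.1.2) (fun _ _ t => t.2.2.symm)

lemma attachInl_map {Z Y : BC R r} (g : Z ⟶ Y) : attachInl g ≫ attachMap g = g :=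
  attachInl_desc _ _ _ _

lemma attach_solves {Z Y : BC R r} (g : Z ⟶ Y) (p n p' n' : ℤ) (h1 : p' + (r : ℤ) = p)
    (h2 : n' + (r : ℤ) = n + 1) (x : Z.X p' n') (y : Y.X p n) (hx : x ∈ Z.cycles p' n')
    (hxy : BCHom.f g p' n' x = Y.d p n p' n' h1 h2 y) :
    ∃ z : (attach g).X p n, (attach g).d p n p' n' h1 h2 z = BCHom.f (attachInl g) _ _ x ∧
      BCHom.f (attachMap g) p n z = y := by
  obtain rfl : p' = p - r := by omega
  obtain rfl : n' = n + 1 - r := by omega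
  exact ⟨attachGen ⟨(x, y), hx, hxy⟩, d_attachGen _, attachDesc_gen _ _ _ _ _⟩

end Factorizations

/-! ## Sequential colimits and the second factorization -/

section SeqColim

variable {R : Type} [CommRing R] {r : ℕ}

/-- The transition maps of a sequence in a fixed bidegree. -/
def seqTr (F : ℕ ⥤ BC R r) (p n : ℤ) (i j : ℕ) (h : i ≤ j) :
    (F.obj i).X p n →ₗ[R] (F.obj j).X p n := BCHom.f (F.map (homOfLE h)) p n

instance seqTr_directed (F : ℕ ⥤ BC R r) (p n : ℤ) :
    DirectedSystem (fun i => (F.obj i).X p n) (fun i j h => seqTr F p n i j h) where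
  map_self i x := by
    change BCHom.f (F.map (𝟙 i)) p n x = x
    rw [F.map_id]
    rfl
  map_map k j i hij hjk x := by
    change BCHom.f (F.map (homOfLE hjk)) p n (BCHom.f (F.map (homOfLE hij)) p n x) =
      BCHom.f (F.map (homOfLE (hij.trans hjk))) p n x
    rw [← BC.comp_f, ← F.map_comp]
    rfl

lemma seqTr_d (F : ℕ ⥤ BC R r) {p n p' n' : ℤ} (h1 : p' + (r : ℤ) = p)
    (h2 : n' + (r : ℤ) = n + 1) (i j : ℕ) (h : i ≤ j) :
    (F.obj j).d p n p' n' h1 h2 ∘ₗ seqTr F p n i j h =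
      seqTr F p' n' i j h ∘ₗ (F.obj i).d p n p' n' h1 h2 :=
  BCHom.comm (F.map (homOfLE h)) p n p' n' h1 h2

/-- The colimit in a fixed bidegree. -/
abbrev seqX (F : ℕ ⥤ BC R r) (p n : ℤ) : Type :=
  Module.DirectLimit (fun i => (F.obj i).X p n) (seqTr F p n)

/-- The coprojections in a fixed bidegree. -/
abbrev seqOf (F : ℕ ⥤ BC R r) (p n : ℤ) (i : ℕ) : (F.obj i).X p n →ₗ[R] seqX F p n :=
  Module.DirectLimit.of R ℕ (fun i => (F.obj i).X p n) (seqTr F p n) i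

/-- The differential of the colimit. -/
def seqD (F : ℕ ⥤ BC R r) (p n p' n' : ℤ) (h1 : p' + (r : ℤ) = p)
    (h2 : n' + (r : ℤ) = n + 1) : seqX F p n →ₗ[R] seqX F p' n' :=
  Module.DirectLimit.map (fun i => (F.obj i).d p n p' n' h1 h2) (seqTr_d F h1 h2)

lemma seqD_of (F : ℕ ⥤ BC R r) {p n p' n' : ℤ} (h1 : p' + (r : ℤ) = p)
    (h2 : n' + (r : ℤ) = n + 1) (i : ℕ) (x : (F.obj i).X p n) :
    seqD F p n p' n' h1 h2 (seqOf F p n i x) =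
      seqOf F p' n' i ((F.obj i).d p n p' n' h1 h2 x) :=
  Module.DirectLimit.map_apply_of _ (seqTr_d F h1 h2) x

/-- The colimit of a sequence. -/
def seqColim (F : ℕ ⥤ BC R r) : BC R r where
  X p n := seqX F p n
  d p n p' n' h1 h2 := seqD F p n p' n' h1 h2
  d_comp_d p n p' n' p'' n'' h1 h2 h3 h4 := by
    apply Module.DirectLimit.hom_ext
    intro i
    refine LinearMap.ext fun x => ?_
    change seqD F p' n' p'' n'' h3 h4 (seqD F p n p' n' h1 h2 (seqOf F p n i x)) = 0
    rw [seqD_of, seqD_of, BC.d_d, map_zero]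

/-- The coprojections. -/
def seqι (F : ℕ ⥤ BC R r) (i : ℕ) : F.obj i ⟶ seqColim F where
  f p n := seqOf F p n i
  comm p n p' n' h1 h2 := LinearMap.ext fun x => seqD_of F h1 h2 i x

lemma seqι_map (F : ℕ ⥤ BC R r) {i j : ℕ} (h : i ≤ j) :
    F.map (homOfLE h) ≫ seqι F j = seqι F i := by
  apply BC.hom_ext'
  intro p n x
  exact Module.DirectLimit.of_f (f := seqTr F p n) (hij := h)

/-- The colimit cocone. -/
def seqCocone (F : ℕ ⥤ BC R r) : Cocone F where
  pt := seqColim F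
  ι :=
    { app := seqι F
      naturality := fun i j φ => by
        rw [Subsingleton.elim φ (homOfLE (leOfHom φ)), seqι_map]
        rfl }

lemma seq_exists (F : ℕ ⥤ BC R r) {p n : ℤ} (z : (seqColim F).X p n) :
    ∃ i x, BCHom.f (seqι F i) p n x = z :=
  Module.DirectLimit.exists_of z

lemma seq_zero (F : ℕ ⥤ BC R r) {p n : ℤ} {i : ℕ} {x : (F.obj i).X p n}
    (h : BCHom.f (seqι F i) p n x = 0) :
    ∃ (j : ℕ) (hij : i ≤ j), BCHom.f (F.map (homOfLE hij)) p n x = 0 :=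
  Module.DirectLimit.of.zero_exact (f := seqTr F p n) h

lemma seqTr_cocone {F : ℕ ⥤ BC R r} (s : Cocone F) (p n : ℤ) (i j : ℕ) (h : i ≤ j)
    (x : (F.obj i).X p n) :
    BCHom.f (s.ι.app j) p n (seqTr F p n i j h x) = BCHom.f (s.ι.app i) p n x :=
  congrArg (fun t => BCHom.f t p n x) (s.w (homOfLE h))

/-- The descent map in a fixed bidegree. -/
def seqLift {F : ℕ ⥤ BC R r} (s : Cocone F) (p n : ℤ) : seqX F p n →ₗ[R] s.pt.X p n :=
  Module.DirectLimit.lift R ℕ (fun i => (F.obj i).X p n) (seqTr F p n)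
    (fun i => BCHom.f (s.ι.app i) p n) (seqTr_cocone s p n)

lemma seqLift_of {F : ℕ ⥤ BC R r} (s : Cocone F) (p n : ℤ) (i : ℕ) (x : (F.obj i).X p n) :
    seqLift s p n (seqOf F p n i x) = BCHom.f (s.ι.app i) p n x := by
  rw [seqLift]
  apply Module.DirectLimit.lift_of

/-- The descent map. -/
def seqDesc {F : ℕ ⥤ BC R r} (s : Cocone F) : seqColim F ⟶ s.pt where
  f p n := seqLift s p n
  comm p n p' n' h1 h2 := by
    apply Module.DirectLimit.hom_ext
    intro i
    refine LinearMap.ext fun x => ?_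
    change s.pt.d p n p' n' h1 h2 (seqLift s p n (seqOf F p n i x)) =
      seqLift s p' n' (seqD F p n p' n' h1 h2 (seqOf F p n i x))
    rw [seqD_of, seqLift_of, seqLift_of, BCHom.comm_apply]

lemma seqι_desc {F : ℕ ⥤ BC R r} (s : Cocone F) (i : ℕ) :
    seqι F i ≫ seqDesc s = s.ι.app i :=
  BC.hom_ext' fun p n x => seqLift_of s p n i x

/-- The cocone is a colimit. -/
def seqIsColimit (F : ℕ ⥤ BC R r) : IsColimit (seqCocone F) where
  desc s := seqDesc s
  fac s i := seqι_desc s i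
  uniq s m hm := by
    apply BC.hom_ext'
    intro p n z
    obtain ⟨i, x, rfl⟩ := seq_exists F z
    exact (congrArg (fun t => BCHom.f t p n x) (hm i)).trans
      (congrArg (fun t => BCHom.f t p n x) (seqι_desc s i)).symm

/-- The stages of the construction. -/
def stage {X Y : BC R r} (f : X ⟶ Y) : ℕ → Σ Z : BC R r, (Z ⟶ Y)
  | 0 => ⟨X, f⟩
  | k + 1 => ⟨attach (stage f k).2, attachMap (stage f k).2⟩

/-- The inclusion of consecutive stages. -/
def stageInl {X Y : BC R r} (f : X ⟶ Y) (k : ℕ) : (stage f k).1 ⟶ (stage f (k + 1)).1 :=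
  attachInl (stage f k).2

lemma stageInl_map {X Y : BC R r} (f : X ⟶ Y) (k : ℕ) :
    stageInl f k ≫ (stage f (k + 1)).2 = (stage f k).2 := attachInl_map _

/-- The sequence of stages. -/
def stages {X Y : BC R r} (f : X ⟶ Y) : ℕ ⥤ BC R r := Functor.ofSequence (stageInl f)

lemma stages_succ {X Y : BC R r} (f : X ⟶ Y) (k : ℕ) :
    (stages f).map (homOfLE (Nat.le_add_right k 1)) = stageInl f k :=
  Functor.ofSequence_map_homOfLE_succ (stageInl f) k

/-- The cocone to the target. -/
def stagesCocone {X Y : BC R r} (f : X ⟶ Y) : Cocone (stages f) where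
  pt := Y
  ι := NatTrans.ofSequence (fun k => (stage f k).2) (fun k => by
    rw [stages_succ]
    exact (stageInl_map f k).trans (Category.comp_id _).symm)

lemma stages_solves {X Y : BC R r} (f : X ⟶ Y) : BC.Solves (seqDesc (stagesCocone f)) := by
  intro p n p' n' h1 h2 x y hx hxy
  obtain ⟨i, x, rfl⟩ := seq_exists _ x
  rw [BC.mem_cycles, BCHom.comm_apply] at hx
  obtain ⟨j, hij, hj⟩ := seq_zero _ hx
  rw [← BCHom.comm_apply] at hj
  have hx' : BCHom.f (seqι (stages f) i) p' n' x =
      BCHom.f (seqι (stages f) j) p' n' (BCHom.f ((stages f).map (homOfLE hij)) p' n' x) := by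
    rw [← BC.comp_f, seqι_map]
  rw [hx'] at hxy ⊢
  generalize BCHom.f ((stages f).map (homOfLE hij)) p' n' x = w at *
  rw [← BC.comp_f, seqι_desc] at hxy
  have key : ∃ z : ((stages f).obj (j + 1)).X p n, ((stages f).obj (j + 1)).d p n p' n' h1 h2 z =
      BCHom.f ((stages f).map (homOfLE (Nat.le_add_right j 1))) p' n' w ∧
      BCHom.f ((stagesCocone f).ι.app (j + 1)) p n z = y := by
    rw [stages_succ]
    exact attach_solves (stage f j).2 p n p' n' h1 h2 w y hj hxy
  obtain ⟨z, hz, hz'⟩ := key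
  refine ⟨BCHom.f (seqι (stages f) (j + 1)) p n z, ?_, ?_⟩
  · rw [BCHom.comm_apply, hz, ← BC.comp_f, seqι_map]
  · rw [← BC.comp_f, seqι_desc]
    exact hz'

lemma stages_llp {X Y : BC R r} (f : X ⟶ Y) {A B : BC R r} (g : A ⟶ B) (hg : BC.Solves g) :
    HasLiftingProperty (seqι (stages f) 0) g := by
  refine HasLiftingProperty.transfiniteComposition.hasLiftingProperty_ι_app_bot
    (c := seqCocone (stages f)) (seqIsColimit _) (p := g) ?_
  intro j _
  have : (stages f).map (homOfLE (Order.le_succ j)) = attachInl (stage f j).2 := stages_succ f j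
  rw [this]
  exact attachInl_llp _ g hg

lemma fact_cells {X Y : BC R r} (f : X ⟶ Y) : ∃ (Z : BC R r) (i : X ⟶ Z) (p : Z ⟶ Y),
    (∀ {A B : BC R r} (g : A ⟶ B), BC.Solves g → HasLiftingProperty i g) ∧
    BC.Solves p ∧ i ≫ p = f :=
  ⟨seqColim (stages f), seqι (stages f) 0, seqDesc (stagesCocone f),
    fun g hg => stages_llp f g hg, stages_solves f, seqι_desc (stagesCocone f) 0⟩

end SeqColim

/-! ## The model structure -/

section Model

variable {R : Type} [CommRing R] {r : ℕ}

/-- The cofibrations. -/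
def bcCof (R : Type) [CommRing R] (r : ℕ) : MorphismProperty (BC R r) :=
  fun _ _ i => ∀ {A B : BC R r} (g : A ⟶ B), BC.Solves g → HasLiftingProperty i g

lemma hMap_comp' {A B C : BC R r} (f : A ⟶ B) (g : B ⟶ C) (p n : ℤ) :
    ⇑(BCHom.hMap (f ≫ g) p n) = ⇑(BCHom.hMap g p n) ∘ ⇑(BCHom.hMap f p n) := by
  have : BCHom.hMap (f ≫ g) p n = (BCHom.hMap g p n).comp (BCHom.hMap f p n) :=
    BCHom.hMap_comp f g p n
  rw [this]
  rfl

lemma hMap_id' (A : BC R r) (p n : ℤ) (x : A.H p n) : BCHom.hMap (𝟙 A) p n x = x := by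
  have : BCHom.hMap (𝟙 A) p n = LinearMap.id := BCHom.hMap_id p n
  rw [this]
  rfl

lemma qiso_cancel_left {X Y Z : BC R r} (f : X ⟶ Y) (g : Y ⟶ Z) (hf : BC.IsQIso f)
    (h : BC.IsQIso (f ≫ g)) : BC.IsQIso g := by
  intro p n
  have := h p n
  rw [hMap_comp'] at this
  exact (Function.Bijective.of_comp_iff _ (hf p n)).1 this

lemma qiso_cancel_right {X Y Z : BC R r} (f : X ⟶ Y) (g : Y ⟶ Z) (hg : BC.IsQIso g)
    (h : BC.IsQIso (f ≫ g)) : BC.IsQIso f := by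
  intro p n
  have := h p n
  rw [hMap_comp'] at this
  exact (Function.Bijective.of_comp_iff' (hg p n) _).1 this

lemma qiso_retract {X Y X' Y' : BC R r} (f : X ⟶ Y) (g : X' ⟶ Y') (h : MorRetract f g)
    (hg : BC.IsQIso g) : BC.IsQIso f := by
  obtain ⟨i, s, j, q, h1, h2, h3, h4⟩ := h
  intro p n
  have e1 : ∀ x, BCHom.hMap s p n (BCHom.hMap i p n x) = x := fun x => by
    rw [← Function.comp_apply (f := BCHom.hMap s p n), ← hMap_comp', h1, hMap_id']
  have e2 : ∀ x, BCHom.hMap q p n (BCHom.hMap j p n x) = x := fun x => by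
    rw [← Function.comp_apply (f := BCHom.hMap q p n), ← hMap_comp', h2, hMap_id']
  have e3 : ∀ x, BCHom.hMap g p n (BCHom.hMap i p n x) =
      BCHom.hMap j p n (BCHom.hMap f p n x) := fun x => by
    rw [← Function.comp_apply (f := BCHom.hMap g p n), ← hMap_comp', h3, hMap_comp']
    rfl
  have e4 : ∀ x, BCHom.hMap q p n (BCHom.hMap g p n x) =
      BCHom.hMap f p n (BCHom.hMap s p n x) := fun x => by
    rw [← Function.comp_apply (f := BCHom.hMap q p n), ← hMap_comp', h4, hMap_comp']
    rfl
  refine ⟨fun x y hxy => ?_, fun y => ?_⟩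
  · rw [← e1 x, ← e1 y]
    apply congrArg
    apply (hg p n).1
    rw [e3, e3, hxy]
  · obtain ⟨x, hx⟩ := (hg p n).2 (BCHom.hMap j p n y)
    exact ⟨BCHom.hMap s p n x, by rw [← e4, hx, e2]⟩

lemma llp_retract {C : Type*} [Category C] {X Y X' Y' A B : C} (f : X ⟶ Y) (g : X' ⟶ Y')
    (h : MorRetract f g) (k : A ⟶ B) (hg : HasLiftingProperty g k) : HasLiftingProperty f k := by
  obtain ⟨i, s, j, q, h1, h2, h3, h4⟩ := h
  refine ⟨fun {u v} sq => ?_⟩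
  have sq' : CommSq (s ≫ u) g k (q ≫ v) := ⟨by
    rw [Category.assoc, sq.w, ← Category.assoc, ← h4, Category.assoc]⟩
  refine ⟨⟨⟨j ≫ sq'.lift, ?_, ?_⟩⟩⟩
  · rw [← Category.assoc, ← h3, Category.assoc, sq'.fac_left, ← Category.assoc, h1,
      Category.id_comp]
  · rw [Category.assoc, sq'.fac_right, ← Category.assoc, h2, Category.id_comp]

lemma surj_retract {X Y X' Y' : BC R r} (f : X ⟶ Y) (g : X' ⟶ Y') (h : MorRetract f g)
    (hg : BC.IsDegreewiseSurj g) : BC.IsDegreewiseSurj f := by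
  obtain ⟨i, s, j, q, h1, h2, h3, h4⟩ := h
  intro p n y
  obtain ⟨x, hx⟩ := hg p n (BCHom.f j p n y)
  refine ⟨BCHom.f s p n x, ?_⟩
  rw [← BC.comp_f, ← h4, BC.comp_f, hx, ← BC.comp_f, h2, BC.id_f]

lemma trivCof_llp {A B X Y : BC R r} (i : A ⟶ B) (p : X ⟶ Y) (hi : bcCof R r i)
    (hw : BC.IsQIso i) (hp : BC.IsDegreewiseSurj p) : HasLiftingProperty i p := by
  obtain ⟨Z, j, q, hj, hjl, hq, e⟩ := fact_discs i
  have hqw : BC.IsQIso q := qiso_cancel_left j q hj (by rw [e]; exact hw)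
  have := hi q ((BC.solves_iff q).2 ⟨hqw, hq⟩)
  have sq : CommSq j i q (𝟙 B) := ⟨by rw [e, Category.comp_id]⟩
  refine llp_retract i j ⟨𝟙 A, 𝟙 A, sq.lift, q, Category.comp_id _, sq.fac_right, ?_, ?_⟩ p
    (hjl p hp)
  · rw [Category.id_comp, sq.fac_left]
  · rw [Category.id_comp, e]

/-- The projective model structure. -/
def bcModel (R : Type) [CommRing R] (r : ℕ) : ModelStructure (BC R r) where
  W := BC.qIso R r
  Cof := bcCof R r
  Fib := BC.degreewiseSurj R r
  hasLimits := bc_hasLimits R r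
  hasColimits := bc_hasColimits R r
  w_comp f g hf hg := by
    intro p n
    rw [hMap_comp']
    exact (hg p n).comp (hf p n)
  w_cancel_left := qiso_cancel_left
  w_cancel_right := qiso_cancel_right
  w_retract := qiso_retract
  cof_retract f g h hg := fun k hk => llp_retract f g h k (hg k hk)
  fib_retract := surj_retract
  lift_cof_trivFib i p hi hp hw := hi p ((BC.solves_iff p).2 ⟨hw, hp⟩)
  lift_trivCof_fib := trivCof_llp
  fact_cof_trivFib f := by
    obtain ⟨Z, i, p, hi, hp, e⟩ := fact_cells f
    exact ⟨Z, i, p, hi, hp.surj, hp.qiso, e⟩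
  fact_trivCof_fib f := by
    obtain ⟨Z, i, p, hw, hi, hp, e⟩ := fact_discs f
    exact ⟨Z, i, p, fun k hk => hi k hk.surj, hw, hp, e⟩

end Model

/-! ## STATEMENT 0:
For every `r ≥ 0`, the category of `r`-bigraded complexes over `R` admits a cofibrantly
generated model category structure whose fibrations are the bidegreewise surjections and whose
weak equivalences are the quasi-isomorphisms, with generating acyclic cofibrations
`{0 ⟶ 𝒴_r(p,n)}` and generating cofibrations `{δ_r : R^{p-r,n-r+1} ⟶ 𝒴_r(p,n)}`. -/
theorem projective_model_structure_on_bigraded_complexes (R : Type) [CommRing R] (r : ℕ) :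
    ∃ M : ModelStructure (BC R r),
      M.Fib = BC.degreewiseSurj R r ∧
      M.W = BC.qIso R r ∧
      IsCofibrantlyGenerated M
        (fun _ _ f => ∃ p n : ℤ, Nonempty (Arrow.mk f ≅ Arrow.mk (deltaBC R r p n)))
        (fun A B _ => IsZero A ∧ ∃ p n : ℤ, Nonempty (B ≅ discBC R r p n)) := by
  exact ⟨bcModel R r, rfl, rfl, ⟨surj_eq_rlp, trivFib_eq_rlp⟩⟩
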